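/- Suppose the quadrature nodes and weights satisfy the vanishing-moment condition, and let λ ∈ ℂ with λ ≠ z_j for all j. For each integer k ≥ 0 define the row vector f_k(λ) ∈ ℂ^{1×n} by (f_k(λ))_p = Σ_{j=1}^N ω_j z_j^k / (z_j − λ)^p for p = 1,…,n. Then for every integer k with 0 ≤ k ≤ N − 1 one has T_n(f_k(λ)) = (J_n(λ))^k · T_n(f_0(λ)). -/

import Mathlib

noncomputable section
open Matrix

/-- The `n×n` Jordan block with eigenvalue `l`: diagonal entries `l`,
superdiagonal entries `1`, all other entries `0`. -/
def jordanBlock (n : ℕ) (l : ℂ) : Matrix (Fin n) (Fin n) ℂ :=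
  Matrix.of fun p q : Fin n =>
    if (q : ℕ) = (p : ℕ) then l else if (q : ℕ) = (p : ℕ) + 1 then 1 else 0

/-- The `n×n` upper triangular Toeplitz matrix `T_n(a)` whose `(p,q)` entry is
`a_{q−p+1}` (1-indexed), i.e. `a (q−p)` (0-indexed) for `q ≥ p`, and `0` otherwise. -/
def toeplitzU (n : ℕ) (a : Fin n → ℂ) : Matrix (Fin n) (Fin n) ℂ :=
  Matrix.of fun p q : Fin n =>
    if (p : ℕ) ≤ (q : ℕ) then a ⟨(q : ℕ) - (p : ℕ), lt_of_le_of_lt (Nat.sub_le _ _) q.isLt⟩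
    else 0

/-!
The Toeplitz matrix of the powers `(z − λ)⁻¹, (z − λ)⁻², …` is the resolvent `(z − J)⁻¹` of the
Jordan block `J = J_n(λ)`, so by linearity `T_n(f_k(λ)) = ∑ⱼ ωⱼ zⱼᵏ (zⱼ − J)⁻¹`. Since
`z (z − J)⁻¹ = J (z − J)⁻¹ + 1`, raising `k` by one multiplies this sum by `J` and adds the `k`-th
moment `∑ⱼ ωⱼ zⱼᵏ` times the identity, which vanishes.
-/

section Resolvent

variable {R A ι : Type*} [CommSemiring R] [Ring A] [Algebra R A]

theorem smul_resolvent_eq_mul_resolvent_add_one {a : A} {z : R} (hz : z ∈ resolventSet R a) :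
    z • resolvent a z = a * resolvent a z + 1 := by
  have hinv : (algebraMap R A z - a) * resolvent a z = 1 := Ring.mul_inverse_cancel _ hz
  rwa [sub_mul, ← Algebra.smul_def, sub_eq_iff_eq_add'] at hinv

theorem sum_mul_pow_smul_resolvent {a : A} {s : Finset ι} {w z : ι → R}
    (hz : ∀ j ∈ s, z j ∈ resolventSet R a) {k : ℕ}
    (hw : ∀ i < k, ∑ j ∈ s, w j * z j ^ i = 0) :
    ∑ j ∈ s, (w j * z j ^ k) • resolvent a (z j) = a ^ k * ∑ j ∈ s, w j • resolvent a (z j) := by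
  induction k with
  | zero => simp
  | succ k ih =>
    calc ∑ j ∈ s, (w j * z j ^ (k + 1)) • resolvent a (z j)
        = ∑ j ∈ s, (w j * z j ^ k) • (a * resolvent a (z j) + 1) :=
          Finset.sum_congr rfl fun j hj => by
            rw [← smul_resolvent_eq_mul_resolvent_add_one (hz j hj), smul_smul, pow_succ, mul_assoc]
      _ = a * ∑ j ∈ s, (w j * z j ^ k) • resolvent a (z j) + (∑ j ∈ s, w j * z j ^ k) • 1 := by
          simp only [smul_add, Finset.sum_add_distrib, Finset.mul_sum, mul_smul_comm,
            Finset.sum_smul]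
      _ = a ^ (k + 1) * ∑ j ∈ s, w j • resolvent a (z j) := by
          rw [hw k k.lt_succ_self, zero_smul, add_zero,
            ih fun i hi => hw i (hi.trans k.lt_succ_self), pow_succ', mul_assoc]

end Resolvent

theorem toeplitzU_const_mul {n : ℕ} (c : ℂ) (a : Fin n → ℂ) :
    toeplitzU n (fun p => c * a p) = c • toeplitzU n a := by
  ext p q
  simp [toeplitzU]

theorem toeplitzU_sum {ι : Type*} {n : ℕ} (s : Finset ι) (a : ι → Fin n → ℂ) :
    toeplitzU n (fun p => ∑ j ∈ s, a j p) = ∑ j ∈ s, toeplitzU n (a j) := by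
  ext p q
  simp [toeplitzU, Matrix.sum_apply]

theorem jordanBlock_mulVec_apply {n : ℕ} (l : ℂ) {v : ℕ → ℂ} (hv : v n = 0) (p : Fin n) :
    (jordanBlock n l *ᵥ fun r => v r) p = l * v p + v (p + 1) := by
  let row (r : ℕ) : ℂ := if r = p then l else if r = p + 1 then 1 else 0
  have row_mul (r : ℕ) :
      row r * v r = (if r = p then l * v r else 0) + if r = p + 1 then v r else 0 := by
    by_cases hr : r = p <;> simp [row, hr]
  calc (jordanBlock n l *ᵥ fun r => v r) p
      = ∑ r ∈ Finset.range n, row r * v r := Fin.sum_univ_eq_sum_range (fun r => row r * v r) n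
    _ = ∑ r ∈ Finset.range (n + 1), row r * v r := by
        rw [Finset.sum_range_succ, hv, mul_zero, add_zero]
    _ = l * v p + v (p + 1) := by
        have hp : (p : ℕ) < n + 1 := p.isLt.trans n.lt_succ_self
        simp [row_mul, Finset.sum_add_distrib, hp]

-- `b 0` cancels between the two sides; it spares the right-hand side a case split at `p = 0`.
theorem jordanBlock_mul_toeplitzU_add (n : ℕ) (l : ℂ) (b : ℕ → ℂ) :
    jordanBlock n l * toeplitzU n (fun p => b (p + 1)) + b 0 • 1 =
      toeplitzU n (fun p => l * b (p + 1) + b p) := by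
  ext p q
  let column (r : ℕ) : ℂ := if r ≤ q then b (q - r + 1) else 0
  have hmul : (jordanBlock n l * toeplitzU n (fun p => b (p + 1))) p q =
      l * column p + column (p + 1) :=
    jordanBlock_mulVec_apply l (v := column) (if_neg q.isLt.not_ge) p
  rw [Matrix.add_apply, hmul]
  rcases lt_trichotomy p q with hpq | rfl | hpq
  · have hsucc : (p : ℕ) + 1 ≤ q := hpq
    have hsub : (q : ℕ) - (p + 1) + 1 = q - p := by omega
    simp [column, toeplitzU, hpq.ne, hpq.le, hsucc, hsub]
  · simp [column, toeplitzU]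
  · have hsucc : ¬ (p : ℕ) + 1 ≤ q := by omega
    simp [column, toeplitzU, hpq.ne', hpq.not_ge, hsucc]

section JordanBlockResolvent

variable (n : ℕ) {l : ℂ}

theorem algebraMap_sub_jordanBlock_mul_toeplitzU {z : ℂ} (hz : z ≠ l) :
    (algebraMap ℂ (Matrix (Fin n) (Fin n) ℂ) z - jordanBlock n l) *
      toeplitzU n (fun p => ((z - l) ^ ((p : ℕ) + 1))⁻¹) = 1 := by
  have hpow (m : ℕ) :
      l * ((z - l) ^ (m + 1))⁻¹ + ((z - l) ^ m)⁻¹ = z * ((z - l) ^ (m + 1))⁻¹ := by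
    have : z - l ≠ 0 := sub_ne_zero.mpr hz
    field_simp
    ring
  have hjordan := jordanBlock_mul_toeplitzU_add n l fun m => ((z - l) ^ m)⁻¹
  simp only [hpow, toeplitzU_const_mul, pow_zero, inv_one, one_smul] at hjordan
  rw [sub_mul, ← Algebra.smul_def, ← hjordan, add_sub_cancel_left]

theorem mem_resolventSet_jordanBlock {z : ℂ} (hz : z ≠ l) :
    z ∈ resolventSet ℂ (jordanBlock n l) :=
  IsUnit.of_mul_eq_one _ (algebraMap_sub_jordanBlock_mul_toeplitzU n hz)

theorem resolvent_jordanBlock {z : ℂ} (hz : z ≠ l) :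
    resolvent (jordanBlock n l) z = toeplitzU n (fun p => ((z - l) ^ ((p : ℕ) + 1))⁻¹) := by
  rw [resolvent, ← Matrix.nonsing_inv_eq_ringInverse]
  exact Matrix.inv_eq_right_inv (algebraMap_sub_jordanBlock_mul_toeplitzU n hz)

theorem toeplitzU_sum_div_eq_sum_smul_resolvent {ι : Type*} {s : Finset ι} {z : ι → ℂ}
    (hz : ∀ j ∈ s, z j ≠ l) (c : ι → ℂ) :
    toeplitzU n (fun p => ∑ j ∈ s, c j / (z j - l) ^ ((p : ℕ) + 1)) =
      ∑ j ∈ s, c j • resolvent (jordanBlock n l) (z j) := by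
  simp only [div_eq_mul_inv, toeplitzU_sum, toeplitzU_const_mul]
  exact Finset.sum_congr rfl fun j hj => by rw [resolvent_jordanBlock n (hz j hj)]

end JordanBlockResolvent

theorem stmt_3_general {ι : Type*} (n : ℕ) (s : Finset ι) (z omega : ι → ℂ) (lam : ℂ)
    (hlam : ∀ j ∈ s, z j ≠ lam) (k : ℕ) (hvm : ∀ i < k, ∑ j ∈ s, omega j * z j ^ i = 0) :
    toeplitzU n (fun p => ∑ j ∈ s, omega j * z j ^ k / (z j - lam) ^ ((p : ℕ) + 1)) =
      jordanBlock n lam ^ k *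
        toeplitzU n (fun p => ∑ j ∈ s, omega j / (z j - lam) ^ ((p : ℕ) + 1)) := by
  rw [toeplitzU_sum_div_eq_sum_smul_resolvent n hlam,
    toeplitzU_sum_div_eq_sum_smul_resolvent n hlam]
  exact sum_mul_pow_smul_resolvent (fun j hj => mem_resolventSet_jordanBlock n (hlam j hj)) hvm

/-- Proposition 3 of the paper: under the vanishing-moment
condition and `λ ≠ z_j` for all `j`, for every `0 ≤ k ≤ N−1` one has
`T_n(f_k(λ)) = (J_n(λ))^k T_n(f_0(λ))`, where
`(f_k(λ))_p = ∑_j ω_j z_j^k/(z_j − λ)^p`. -/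
theorem stmt_3 (N n : ℕ) (z omega : Fin N → ℂ)
    (hvm : ∀ k : ℕ, k + 2 ≤ N → ∑ j, omega j * z j ^ k = 0)
    (lam : ℂ) (hlam : ∀ j, lam ≠ z j)
    (k : ℕ) (hk : k + 1 ≤ N) :
    toeplitzU n (fun p : Fin n =>
        ∑ j, omega j * z j ^ k / (z j - lam) ^ ((p : ℕ) + 1)) =
      jordanBlock n lam ^ k *
        toeplitzU n (fun p : Fin n =>
          ∑ j, omega j * z j ^ 0 / (z j - lam) ^ ((p : ℕ) + 1)) := by
  simpa only [pow_zero, mul_one] using stmt_3_general n Finset.univ z omega lam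
    (fun j _ => (hlam j).symm) k fun i hi => hvm i (by omega)
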